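/- arXiv:2512.04077 — 4 statements merged into one kernel-verified Lean document; each statement's English description precedes it below -/
import Mathlib

section
/- A dual-regime absorbing Markov chain is absorbed with probability one: σ₁ 𝟙 + σ₂ 𝟙 = 1, where σ₁ = β₁ (I - A₁^{τ-1})(I - A₁)^{-1} B₁, σ₂ = β₂ (I - A₂)^{-1} B₂ and β₂ = β₁ A₁^{τ-1} Θ. -/
/-!
Since `(I - A) 𝟙 = B 𝟙`, the vector `(I - A)⁻¹ B 𝟙` equals `𝟙` whenever `I - A` is invertible: from
every transient state absorption is certain. Writing `P = A₁ ^ (τ - 1)`, this gives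
`σ₁ 𝟙 = β₁ (I - P) 𝟙 = 1 - β₁ P 𝟙` and, as `Θ 𝟙 = 𝟙`, `σ₂ 𝟙 = β₁ P Θ 𝟙 = β₁ P 𝟙`, so the two
masses add up to one. Invertibility of `I - A₂` comes from the Neumann series, as `‖A₂‖ < 1`.
-/

open Matrix

attribute [local instance] Matrix.linftyOpNormedRing Matrix.linftyOpNormedAlgebra

/-- A time-homogeneous absorbing chain with invertible `I - A` is absorbed with probability one from
every transient state. -/
lemma inv_one_sub_mulVec_absorb {K L : ℕ} (A : Matrix (Fin K) (Fin K) ℝ)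
    (B : Matrix (Fin K) (Fin L) ℝ) (h : A *ᵥ 1 + B *ᵥ 1 = 1) (hA : IsUnit (1 - A)) :
    (1 - A)⁻¹ *ᵥ (B *ᵥ 1) = 1 := by
  have hB : B *ᵥ 1 = (1 - A) *ᵥ 1 := by
    rw [Matrix.sub_mulVec, Matrix.one_mulVec]
    exact eq_sub_of_add_eq' h
  rw [hB, Matrix.mulVec_mulVec,
    Matrix.nonsing_inv_mul _ ((Matrix.isUnit_iff_isUnit_det _).mp hA), Matrix.one_mulVec]

/-- A dual-regime absorbing Markov chain is absorbed with probability one: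
σ₁ 𝟙 + σ₂ 𝟙 = 1. -/
theorem dr_amc_absorbed_with_probability_one {K₁ K₂ L : ℕ} (τ : ℕ) (hτ : 1 ≤ τ)
    (β₁ : Fin K₁ → ℝ) (hβ₁nonneg : ∀ i, 0 ≤ β₁ i) (hβ₁sum : β₁ ⬝ᵥ 1 = 1)
    (A₁ : Matrix (Fin K₁) (Fin K₁) ℝ) (A₂ : Matrix (Fin K₂) (Fin K₂) ℝ)
    (B₁ : Matrix (Fin K₁) (Fin L) ℝ) (B₂ : Matrix (Fin K₂) (Fin L) ℝ)
    (hstoch₁ : A₁ *ᵥ 1 + B₁ *ᵥ 1 = 1) (hstoch₂ : A₂ *ᵥ 1 + B₂ *ᵥ 1 = 1)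
    (Θ : Matrix (Fin K₁) (Fin K₂) ℝ) (hΘrow : Θ *ᵥ 1 = 1)
    (hA₁ : IsUnit (1 - A₁)) (hA₂norm : ‖A₂‖ < 1)
    (β₂ : Fin K₂ → ℝ) (hβ₂ : β₂ = β₁ ᵥ* (A₁ ^ (τ - 1) * Θ))
    (σ₁ : Fin L → ℝ) (hσ₁ : σ₁ = β₁ ᵥ* ((1 - A₁ ^ (τ - 1)) * (1 - A₁)⁻¹ * B₁))
    (σ₂ : Fin L → ℝ) (hσ₂ : σ₂ = β₂ ᵥ* ((1 - A₂)⁻¹ * B₂)) :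
    σ₁ ⬝ᵥ 1 + σ₂ ⬝ᵥ 1 = 1 := by
  have hA₂ : IsUnit (1 - A₂) := isUnit_one_sub_of_norm_lt_one hA₂norm
  have h₁ := inv_one_sub_mulVec_absorb A₁ B₁ hstoch₁ hA₁
  have h₂ := inv_one_sub_mulVec_absorb A₂ B₂ hstoch₂ hA₂
  have e₁ : σ₁ ⬝ᵥ 1 = 1 - β₁ ⬝ᵥ (A₁ ^ (τ - 1) *ᵥ 1) := by
    rw [hσ₁, ← Matrix.dotProduct_mulVec, ← Matrix.mulVec_mulVec, ← Matrix.mulVec_mulVec, h₁,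
      Matrix.sub_mulVec, Matrix.one_mulVec, dotProduct_sub, hβ₁sum]
  have e₂ : σ₂ ⬝ᵥ 1 = β₁ ⬝ᵥ (A₁ ^ (τ - 1) *ᵥ 1) := by
    rw [hσ₂, ← Matrix.dotProduct_mulVec, ← Matrix.mulVec_mulVec, h₂, hβ₂,
      ← Matrix.dotProduct_mulVec, ← Matrix.mulVec_mulVec, hΘrow]
  rw [e₁, e₂, sub_add_cancel]
end

section
/- For a square real matrix A with ‖A‖ < 1 in a submultiplicative matrix operator norm, and any nonnegative integer r, the series of matrices ∑_{t=0}^{∞} t^{\underline{r}} A^{t} converges and equals r! · A^{r} (I - A)^{-(r+1)}, where t^{\underline{r}} = t(t-1)⋯(t-r+1) is the falling factorial. -/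
open Matrix

attribute [local instance] Matrix.linftyOpNormedRing Matrix.linftyOpNormedAlgebra

/-- For ‖A‖ < 1 and r ∈ ℕ, the falling-factorial matrix series converges:
∑_{t=0}^{∞} t^{\underline r} A^t = r! · A^r (I - A)^{-(r+1)}. -/
theorem falling_factorial_matrix_series {K : ℕ}
    (A : Matrix (Fin K) (Fin K) ℝ) (hA : ‖A‖ < 1) (r : ℕ) :
    HasSum (fun t : ℕ => (t.descFactorial r : ℝ) • A ^ t)
      ((r.factorial : ℝ) • (A ^ r * (1 - A)⁻¹ ^ (r + 1))) := by
  -- The binomial series `∑ (n + r).choose r • A ^ n = (1 - A)⁻¹ ^ (r + 1)`, times `r! • A ^ r`,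
  -- is the tail `t = n + r` of the series; the terms with `t < r` vanish.
  have hchoose := hasSum_choose_mul_geometric_of_norm_lt_one' r hA
  rw [← Matrix.nonsing_inv_eq_ringInverse] at hchoose
  have htail := (hchoose.mul_left (A ^ r)).const_smul (r.factorial : ℝ)
  have hvanish : ∑ t ∈ Finset.range r, (t.descFactorial r : ℝ) • A ^ t = 0 :=
    Finset.sum_eq_zero fun t ht => by
      simp [Nat.descFactorial_eq_zero_iff_lt.2 (Finset.mem_range.1 ht)]
  rw [← hasSum_nat_add_iff' r, hvanish, sub_zero]
  convert! htail using 2 with n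
  rw [Nat.descFactorial_eq_factorial_mul_choose, Nat.cast_mul, mul_smul, pow_add,
    ← (Nat.cast_commute _ (A ^ r)).left_comm, ← (Commute.pow_pow_self A n r).eq,
    ← nsmul_eq_mul, Nat.cast_smul_eq_nsmul ℝ ((n + r).choose r)]
end

section
/- For a random variable T with the DR-DPH(β₁, τ, Θ, A₁, A₂) pmf and an integer m with 0 ≤ m ≤ τ, the m-th factorial moment ν(m) = ∑_{t=1}^{∞} t^{\underline{m}} p(t) equals β₁ ∑_{t=1}^{τ-1} t^{\underline{m}} A₁^{t-1} (𝟙 - A₁ 𝟙) + β₂ ∑_{r=0}^{m} C(m,r) · τ^{\underline{m-r}} · r! · A₂^{r} (I - A₂)^{-(r+1)} (𝟙 - A₂ 𝟙), where β₂ = β₁ A₁^{τ-1} Θ. -/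
/-!
Split the series at `τ`. The terms with `t < τ` give the finite sum. For `t = τ + s`, the
Chu–Vandermonde identity for falling factorials
(`add_descFactorial_eq_sum`) separates the factor depending on `τ` from `s.descFactorial r`, and each
resulting matrix series is a derivative of the geometric series,
`∑ s, s.descFactorial r • A ^ s = r! • A ^ r (1 - A)⁻¹ ^ (r + 1)` (`hasSum_descFactorial_pow`).
The row and column vectors are applied through a continuous linear functional on matrices, so
summability is preserved as well.
-/

open Matrix

attribute [local instance] Matrix.linftyOpNormedRing Matrix.linftyOpNormedAlgebra

/-- Chu–Vandermonde for falling factorials: this is `Nat.add_choose_eq` multiplied by `m!`. -/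
lemma add_descFactorial_eq_sum (a s m : ℕ) :
    (a + s).descFactorial m =
      ∑ r ∈ Finset.range (m + 1), m.choose r * a.descFactorial (m - r) * s.descFactorial r := by
  rw [Nat.descFactorial_eq_factorial_mul_choose, add_comm a s, Nat.add_choose_eq,
    Finset.Nat.sum_antidiagonal_eq_sum_range_succ_mk, Finset.mul_sum]
  refine Finset.sum_congr rfl fun r hr => ?_
  rw [Nat.descFactorial_eq_factorial_mul_choose, Nat.descFactorial_eq_factorial_mul_choose,
    ← Nat.choose_mul_factorial_mul_factorial (Finset.mem_range_succ_iff.mp hr)]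
  ring

/-- The `r`-th derivative of the geometric series, multiplied by `A ^ r`. -/
lemma hasSum_descFactorial_pow {K : ℕ} (A : Matrix (Fin K) (Fin K) ℝ) (hA : ‖A‖ < 1) (r : ℕ) :
    HasSum (fun s : ℕ => (s.descFactorial r : ℝ) • A ^ s)
      ((r.factorial : ℝ) • (A ^ r * (1 - A)⁻¹ ^ (r + 1))) := by
  have h := (hasSum_choose_mul_geometric_of_norm_lt_one' r hA).mul_left (A ^ r)
  have h2 := h.const_smul (r.factorial : ℝ)
  rw [← Matrix.nonsing_inv_eq_ringInverse] at h2
  -- The terms with `s < r` vanish, so the series may start at `s = r`.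
  rw [← hasSum_nat_add_iff' r, Finset.sum_eq_zero, sub_zero]
  · convert! h2 using 2 with s
    rw [Nat.descFactorial_eq_factorial_mul_choose, Nat.cast_mul, mul_smul, pow_add,
      (Nat.cast_commute _ (A ^ s)).eq, ← mul_assoc, ← (Nat.cast_commute _ _).eq,
      ← nsmul_eq_mul, Nat.cast_smul_eq_nsmul ℝ ((s + r).choose r), (Commute.pow_pow_self A s r).eq]
  · intro s hs
    simp [Nat.descFactorial_of_lt (Finset.mem_range.mp hs)]

/-- The bilinear form `M ↦ u M v`, as a linear functional of the matrix `M`. -/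
def vecMulDotLinear {K : ℕ} (u v : Fin K → ℝ) : Matrix (Fin K) (Fin K) ℝ →ₗ[ℝ] ℝ where
  toFun M := (u ᵥ* M) ⬝ᵥ v
  map_add' M N := by simp [Matrix.vecMul_add, add_dotProduct]
  map_smul' c M := by simp [Matrix.vecMul_smul, smul_dotProduct]

/-- The part of the factorial moment carried by the times `a + s`, `s ≥ 0`. -/
lemma hasSum_tail {K : ℕ} (A : Matrix (Fin K) (Fin K) ℝ) (hA : ‖A‖ < 1) (u v : Fin K → ℝ)
    (a m : ℕ) :
    HasSum (fun s : ℕ => ((a + s).descFactorial m : ℝ) * ((u ᵥ* A ^ s) ⬝ᵥ v))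
      ((u ᵥ* (∑ r ∈ Finset.range (m + 1),
          ((m.choose r : ℝ) * (a.descFactorial (m - r) : ℝ) * (r.factorial : ℝ)) •
            (A ^ r * (1 - A)⁻¹ ^ (r + 1)))) ⬝ᵥ v) := by
  have h : HasSum (fun s : ℕ => ((a + s).descFactorial m : ℝ) • A ^ s)
      (∑ r ∈ Finset.range (m + 1),
        ((m.choose r : ℝ) * (a.descFactorial (m - r) : ℝ) * (r.factorial : ℝ)) •
          (A ^ r * (1 - A)⁻¹ ^ (r + 1))) := by
    have h1 := hasSum_sum (s := Finset.range (m + 1)) fun r _ =>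
      (hasSum_descFactorial_pow A hA r).const_smul
        ((m.choose r : ℝ) * (a.descFactorial (m - r) : ℝ))
    convert! h1 using 2 with s r
    · rw [add_descFactorial_eq_sum]
      push_cast
      simp only [Finset.sum_smul, mul_smul]
    · simp only [mul_smul]
  have hL := (LinearMap.toContinuousLinearMap (vecMulDotLinear u v)).hasSum h
  convert! hL using 2 with s
  simp [vecMulDotLinear, Matrix.vecMul_smul]

/-- The m-th factorial moment of a DR-DPH(β₁, τ, Θ, A₁, A₂) random variable, for
0 ≤ m ≤ τ:  ν(m) = ∑_{t=1}^{∞} t^{\underline m} p(t)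
  = β₁ ∑_{t=1}^{τ-1} t^{\underline m} A₁^{t-1} (𝟙 - A₁𝟙)
    + β₂ ∑_{r=0}^{m} C(m,r) τ^{\underline{m-r}} r! A₂^r (I - A₂)^{-(r+1)} (𝟙 - A₂𝟙). -/
theorem drdph_factorial_moment {K₁ K₂ : ℕ} (τ : ℕ) (hτ : 1 ≤ τ)
    (β₁ : Fin K₁ → ℝ) (hβ₁nonneg : ∀ i, 0 ≤ β₁ i) (hβ₁sum : β₁ ⬝ᵥ 1 = 1)
    (A₁ : Matrix (Fin K₁) (Fin K₁) ℝ) (hA₁ : ∀ i j, 0 ≤ A₁ i j)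
    (A₂ : Matrix (Fin K₂) (Fin K₂) ℝ) (hA₂ : ∀ i j, 0 ≤ A₂ i j)
    (Θ : Matrix (Fin K₁) (Fin K₂) ℝ) (hΘ : ∀ i j, 0 ≤ Θ i j)
    (hΘrow : Θ *ᵥ 1 = 1) (hA₂norm : ‖A₂‖ < 1)
    (β₂ : Fin K₂ → ℝ) (hβ₂ : β₂ = β₁ ᵥ* (A₁ ^ (τ - 1) * Θ))
    (p : ℕ → ℝ)
    (hp₁ : ∀ t : ℕ, 1 ≤ t → t < τ → p t = (β₁ ᵥ* A₁ ^ (t - 1)) ⬝ᵥ (1 - A₁ *ᵥ 1))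
    (hp₂ : ∀ t : ℕ, τ ≤ t → p t = (β₂ ᵥ* A₂ ^ (t - τ)) ⬝ᵥ (1 - A₂ *ᵥ 1))
    (m : ℕ) (hmτ : m ≤ τ) :
    ∑' t : ℕ, ((t + 1).descFactorial m : ℝ) * p (t + 1) =
      (∑ t ∈ Finset.Icc 1 (τ - 1),
        (t.descFactorial m : ℝ) * ((β₁ ᵥ* A₁ ^ (t - 1)) ⬝ᵥ (1 - A₁ *ᵥ 1))) +
      (β₂ ᵥ* (∑ r ∈ Finset.range (m + 1),
          ((m.choose r : ℝ) * (τ.descFactorial (m - r) : ℝ) * (r.factorial : ℝ)) •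
            (A₂ ^ r * (1 - A₂)⁻¹ ^ (r + 1)))) ⬝ᵥ (1 - A₂ *ᵥ 1) := by
  obtain ⟨n, rfl⟩ : ∃ n, τ = n + 1 := ⟨τ - 1, by omega⟩
  have htail := hasSum_tail A₂ hA₂norm β₂ (1 - A₂ *ᵥ 1) (n + 1) m
  have hshift : ∀ s : ℕ, ((n + 1 + s).descFactorial m : ℝ) *
      ((β₂ ᵥ* A₂ ^ s) ⬝ᵥ (1 - A₂ *ᵥ 1)) =
      ((s + n + 1).descFactorial m : ℝ) * p (s + n + 1) := by
    intro s
    rw [hp₂ _ (by omega), show s + n + 1 - (n + 1) = s by omega,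
      show s + n + 1 = n + 1 + s by omega]
  simp only [hshift] at htail
  have hsum := (hasSum_nat_add_iff
    (f := fun t : ℕ => ((t + 1).descFactorial m : ℝ) * p (t + 1)) n).mp htail
  rw [hsum.tsum_eq, add_comm]
  congr 1
  rw [Nat.add_sub_cancel, ← Finset.Ico_add_one_right_eq_Icc, Finset.sum_Ico_eq_sum_range,
    Nat.add_sub_cancel]
  refine Finset.sum_congr rfl fun t ht => ?_
  have ht' := Finset.mem_range.mp ht
  rw [hp₁ (t + 1) (by omega) (by omega), add_comm t 1]
end

section
/- The mean of a DR-DPH(β₁, τ, Θ, A₁, A₂) random variable T satisfies ∑_{t=1}^{∞} t · p(t) = ∑_{t=1}^{τ-1} t · β₁ A₁^{t-1} (𝟙 - A₁ 𝟙) + β₂ ( τ (I - A₂)^{-1} + A₂ (I - A₂)^{-2} ) (𝟙 - A₂ 𝟙), where β₂ = β₁ A₁^{τ-1} Θ. -/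
/-!
Since `‖A₂‖ < 1`, the series `∑ A₂ ^ n` and `∑ n A₂ ^ n` converge to `S = (1 - A₂)⁻¹` and
`A₂ S ^ 2`, so `∑ (τ + n) A₂ ^ n = τ S + A₂ S ^ 2` (`hasSum_shifted_geometric`). Applying the continuous
linear functional `M ↦ β₂ M (𝟙 - A₂ 𝟙)` sums the tail `t ≥ τ` of the mean, and the finitely many
terms `t < τ` form the remaining finite sum.
-/

open Matrix

attribute [local instance] Matrix.linftyOpNormedRing Matrix.linftyOpNormedAlgebra

/-- The Neumann series with coefficients `c + n`, the matrix form of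
`∑ (c + n) xⁿ = c / (1 - x) + x / (1 - x)²`. -/
theorem hasSum_shifted_geometric {K : ℕ} (A : Matrix (Fin K) (Fin K) ℝ) (hA : ‖A‖ < 1) (c : ℝ) :
    HasSum (fun n : ℕ => (c + n) • A ^ n) (c • (1 - A)⁻¹ + A * (1 - A)⁻¹ ^ 2) := by
  have h := ((hasSum_geom_series_inverse A hA).const_smul c).add
    (hasSum_coe_mul_geometric_of_norm_lt_one' hA)
  have hf : (fun n : ℕ => (c + n) • A ^ n) = fun n : ℕ => c • A ^ n + (n : Matrix _ _ ℝ) * A ^ n := by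
    funext n
    rw [add_smul, ← nsmul_eq_mul, Nat.cast_smul_eq_nsmul]
  rw [Matrix.nonsing_inv_eq_ringInverse, hf]
  exact h

/-- The mean of a DR-DPH(β₁, τ, Θ, A₁, A₂) random variable:
∑_{t=1}^{∞} t·p(t) = ∑_{t=1}^{τ-1} t β₁ A₁^{t-1}(𝟙 - A₁𝟙)
  + β₂ (τ (I - A₂)⁻¹ + A₂ (I - A₂)⁻²) (𝟙 - A₂𝟙). -/
theorem drdph_mean {K₁ K₂ : ℕ} (τ : ℕ) (hτ : 1 ≤ τ)
    (β₁ : Fin K₁ → ℝ) (hβ₁nonneg : ∀ i, 0 ≤ β₁ i) (hβ₁sum : β₁ ⬝ᵥ 1 = 1)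
    (A₁ : Matrix (Fin K₁) (Fin K₁) ℝ) (hA₁ : ∀ i j, 0 ≤ A₁ i j)
    (A₂ : Matrix (Fin K₂) (Fin K₂) ℝ) (hA₂ : ∀ i j, 0 ≤ A₂ i j)
    (Θ : Matrix (Fin K₁) (Fin K₂) ℝ) (hΘ : ∀ i j, 0 ≤ Θ i j)
    (hΘrow : Θ *ᵥ 1 = 1) (hA₂norm : ‖A₂‖ < 1)
    (β₂ : Fin K₂ → ℝ) (hβ₂ : β₂ = β₁ ᵥ* (A₁ ^ (τ - 1) * Θ))
    (p : ℕ → ℝ)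
    (hp₁ : ∀ t : ℕ, 1 ≤ t → t < τ → p t = (β₁ ᵥ* A₁ ^ (t - 1)) ⬝ᵥ (1 - A₁ *ᵥ 1))
    (hp₂ : ∀ t : ℕ, τ ≤ t → p t = (β₂ ᵥ* A₂ ^ (t - τ)) ⬝ᵥ (1 - A₂ *ᵥ 1)) :
    ∑' t : ℕ, ((t : ℝ) + 1) * p (t + 1) =
      (∑ t ∈ Finset.Icc 1 (τ - 1),
        (t : ℝ) * ((β₁ ᵥ* A₁ ^ (t - 1)) ⬝ᵥ (1 - A₁ *ᵥ 1))) +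
      (β₂ ᵥ* ((τ : ℝ) • (1 - A₂)⁻¹ + A₂ * (1 - A₂)⁻¹ ^ 2)) ⬝ᵥ (1 - A₂ *ᵥ 1) := by
  obtain ⟨s, rfl⟩ : ∃ s, τ = s + 1 := ⟨τ - 1, by omega⟩
  rw [Nat.add_sub_cancel]
  set v : Fin K₂ → ℝ := 1 - A₂ *ᵥ 1 with hv
  let L : Matrix (Fin K₂) (Fin K₂) ℝ →ₗ[ℝ] ℝ :=
    { toFun := fun M => (β₂ ᵥ* M) ⬝ᵥ v
      map_add' := fun M N => by rw [Matrix.vecMul_add, add_dotProduct]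
      map_smul' := fun r M => by rw [Matrix.vecMul_smul, smul_dotProduct]; rfl }
  have htail : HasSum (fun n : ℕ => (((n + s : ℕ) : ℝ) + 1) * p (n + s + 1))
      (L (((s + 1 : ℕ) : ℝ) • (1 - A₂)⁻¹ + A₂ * (1 - A₂)⁻¹ ^ 2)) := by
    have h := (hasSum_shifted_geometric A₂ hA₂norm ((s + 1 : ℕ) : ℝ)).map L
      L.continuous_of_finiteDimensional
    convert h using 1
    funext n
    rw [Function.comp_apply, map_smul, smul_eq_mul, hp₂ _ (by omega),
      show n + s + 1 - (s + 1) = n by omega]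
    push_cast
    change _ = _ * ((β₂ ᵥ* A₂ ^ n) ⬝ᵥ v)
    ring
  have hfull := (hasSum_nat_add_iff (f := fun t : ℕ => ((t : ℝ) + 1) * p (t + 1)) s).mp htail
  rw [hfull.tsum_eq, add_comm]
  congr 1
  -- The series is indexed by `t - 1`, hence the shift from `range s` to `Icc 1 s`.
  have hIcc : Finset.Icc 1 s = Finset.Ico (0 + 1) (s + 1) := by
    ext t
    simp only [Finset.mem_Icc, Finset.mem_Ico]
    omega
  rw [hIcc, ← Finset.sum_Ico_add', Finset.range_eq_Ico]
  refine Finset.sum_congr rfl fun t ht => ?_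
  rw [hp₁ (t + 1) (by omega) (by have := (Finset.mem_Ico.mp ht).2; omega)]
  push_cast
  rfl
end
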